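/- Let H ≤ G be an embedding of linearly reductive quantum groups and let V ∈ Ĝ be a simple O(G)-comodule whose restriction to the relative center Z(G,H) = Z(G) ∩ H is a sum of copies of the trivial character. Then there exists a simple O(G)-comodule V₁ ∈ Ĝ whose central character (restriction to Z(G)) is trivial and which is not disjoint from V over H, i.e. hom_H(V₁, V|_H) ≠ 0. -/

import Mathlib

/- Common infrastructure: right comodules over coalgebras, simplicity,
cosemisimplicity, subcoalgebras, adjoint coactions, normality, etc. -/

open TensorProduct

universe u

namespace QG

variable (k : Type u) [Field k]

section Coalg

variable (C : Type u) [AddCommGroup C] [Module k C] [Coalgebra k C]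

/-- `ρ : V →ₗ[k] V ⊗[k] C` is a (coassociative, counital) right coaction. -/
structure IsComod {V : Type u} [AddCommGroup V] [Module k V]
    (ρ : V →ₗ[k] V ⊗[k] C) : Prop where
  coassoc : ∀ v : V, ρ.rTensor C (ρ v) =
    (TensorProduct.assoc k V C C).symm.toLinearMap
      ((Coalgebra.comul (R := k) (A := C)).lTensor V (ρ v))
  counit : ∀ v : V, (TensorProduct.rid k V)
      ((Coalgebra.counit (R := k) (A := C)).lTensor V (ρ v)) = v

/-- A submodule `U ≤ V` is a subcomodule if the coaction restricts to it,
i.e. maps `U` into the image of `U ⊗ C` in `V ⊗ C`. -/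
def IsSubcomod {V : Type u} [AddCommGroup V] [Module k V]
    (ρ : V →ₗ[k] V ⊗[k] C) (U : Submodule k V) : Prop :=
  ∀ u ∈ U, ρ u ∈ LinearMap.range ((U.subtype).rTensor C)

/-- A simple subcomodule: a nonzero subcomodule with no nonzero proper
subcomodules below it. -/
def IsSimpleSubcomod {V : Type u} [AddCommGroup V] [Module k V]
    (ρ : V →ₗ[k] V ⊗[k] C) (U : Submodule k V) : Prop :=
  IsSubcomod k C ρ U ∧ U ≠ ⊥ ∧
    ∀ U' : Submodule k V, U' ≤ U → IsSubcomod k C ρ U' → U' = ⊥ ∨ U' = U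

/-- A comodule is simple if it is simple as a subcomodule of itself. -/
def IsSimpleComod {V : Type u} [AddCommGroup V] [Module k V]
    (ρ : V →ₗ[k] V ⊗[k] C) : Prop :=
  IsSimpleSubcomod k C ρ ⊤

/-- Morphisms of right `C`-comodules. -/
def IsComodHom {V W : Type u} [AddCommGroup V] [Module k V]
    [AddCommGroup W] [Module k W]
    (ρV : V →ₗ[k] V ⊗[k] C) (ρW : W →ₗ[k] W ⊗[k] C) (f : V →ₗ[k] W) : Prop :=
  ρW ∘ₗ f = (f.rTensor C) ∘ₗ ρV

/-- `C` is cosemisimple: every right `C`-comodule is an (internal) direct sum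
of simple subcomodules. -/
def IsCosemisimple : Prop :=
  ∀ (V : Type u) [AddCommGroup V] [Module k V]
    (ρ : V →ₗ[k] V ⊗[k] C), IsComod k C ρ →
    ∃ (ι : Type u) (U : ι → Submodule k V),
      (∀ i, IsSimpleSubcomod k C ρ (U i)) ∧
      iSupIndep U ∧ (⨆ i, U i) = ⊤

/-- Subcoalgebras of `C`, as submodules. -/
def IsSubcoalgebra (D : Submodule k C) : Prop :=
  ∀ x ∈ D, Coalgebra.comul (R := k) x ∈
    LinearMap.range (TensorProduct.map D.subtype D.subtype)

/-- Simple subcoalgebras: nonzero ones with no nonzero proper subcoalgebras. -/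
def IsSimpleSubcoalgebra (D : Submodule k C) : Prop :=
  IsSubcoalgebra k C D ∧ D ≠ ⊥ ∧
    ∀ D' : Submodule k C, D' ≤ D → IsSubcoalgebra k C D' → D' = ⊥ ∨ D' = D

/-- The coefficient space of a comodule: the smallest submodule `D ≤ C` such
that the coaction factors through `V ⊗ D`.  For a simple comodule this is its
coefficient coalgebra. -/
def coeffSpace {V : Type u} [AddCommGroup V] [Module k V]
    (ρ : V →ₗ[k] V ⊗[k] C) : Submodule k C :=
  sInf {D : Submodule k C | ∀ v : V, ρ v ∈ LinearMap.range ((D.subtype).lTensor V)}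

/-- Corestriction of a coaction along a linear map of coalgebras `π : C → D`. -/
noncomputable def cores {D : Type u} [AddCommGroup D] [Module k D]
    {V : Type u} [AddCommGroup V] [Module k V]
    (π : C →ₗ[k] D) (ρ : V →ₗ[k] V ⊗[k] C) : V →ₗ[k] V ⊗[k] D :=
  (π.lTensor V) ∘ₗ ρ

end Coalg

section Bialg

variable (H : Type u) [Ring H] [Bialgebra k H]

/-- An invariant vector for a coaction of a bialgebra. -/
def IsInvariant {V : Type u} [AddCommGroup V] [Module k V]
    (ρ : V →ₗ[k] V ⊗[k] H) (v : V) : Prop :=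
  ρ v = v ⊗ₜ[k] (1 : H)

/-- The tensor product coaction on `V ⊗ W` for a bialgebra `H`:
`v ⊗ w ↦ (v₀ ⊗ w₀) ⊗ v₁w₁`. -/
noncomputable def tensorCoact {V W : Type u}
    [AddCommGroup V] [Module k V] [AddCommGroup W] [Module k W]
    (ρV : V →ₗ[k] V ⊗[k] H) (ρW : W →ₗ[k] W ⊗[k] H) :
    (V ⊗[k] W) →ₗ[k] (V ⊗[k] W) ⊗[k] H :=
  ((LinearMap.mul' k H).lTensor (V ⊗[k] W)) ∘ₗ
    (TensorProduct.tensorTensorTensorComm k V H W H).toLinearMap ∘ₗ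
    (TensorProduct.map ρV ρW)

/-- `O(G/H)`: the right coinvariants `{x | (id ⊗ π)Δ(x) = x ⊗ 1}` of a
quotient map `π`. -/
noncomputable def quotientSpaceLeft {B : Type u} [AddCommGroup B] [Module k B] [One B]
    (π : H →ₗ[k] B) : Submodule k H :=
  LinearMap.ker ((π.lTensor H) ∘ₗ (Coalgebra.comul (R := k) (A := H)) -
    (TensorProduct.mk k H B).flip 1)

/-- `O(H\G)`: the left coinvariants `{x | (π ⊗ id)Δ(x) = 1 ⊗ x}`. -/
noncomputable def quotientSpaceRight {B : Type u} [AddCommGroup B] [Module k B] [One B]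
    (π : H →ₗ[k] B) : Submodule k H :=
  LinearMap.ker ((π.rTensor H) ∘ₗ (Coalgebra.comul (R := k) (A := H)) -
    (TensorProduct.mk k B H) 1)

end Bialg

section Hopf

variable (H : Type u) [Ring H] [HopfAlgebra k H]

/-- Iterated comultiplication `x ↦ x₁ ⊗ (x₂ ⊗ x₃)`. -/
noncomputable def comul2 : H →ₗ[k] H ⊗[k] (H ⊗[k] H) :=
  ((Coalgebra.comul (R := k) (A := H)).lTensor H) ∘ₗ (Coalgebra.comul (R := k) (A := H))

/-- The right adjoint coaction `x ↦ x₂ ⊗ S(x₁)x₃`. -/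
noncomputable def adR : H →ₗ[k] H ⊗[k] H :=
  ((LinearMap.mul' k H).lTensor H) ∘ₗ
    (TensorProduct.assoc k H H H).toLinearMap ∘ₗ
    (((TensorProduct.comm k H H).toLinearMap).rTensor H) ∘ₗ
    (TensorProduct.assoc k H H H).symm.toLinearMap ∘ₗ
    ((HopfAlgebra.antipode (R := k) (A := H)).rTensor (H ⊗[k] H)) ∘ₗ
    comul2 k H

/-- The left adjoint coaction `x ↦ x₁S(x₃) ⊗ x₂` (a left coaction, with the
coacting tensorand on the left). -/
noncomputable def adL : H →ₗ[k] H ⊗[k] H :=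
  ((LinearMap.mul' k H).rTensor H) ∘ₗ
    (TensorProduct.assoc k H H H).symm.toLinearMap ∘ₗ
    (((TensorProduct.comm k H H).toLinearMap).lTensor H) ∘ₗ
    (((HopfAlgebra.antipode (R := k) (A := H)).lTensor H).lTensor H) ∘ₗ
    comul2 k H

variable {B : Type u} [AddCommGroup B] [Module k B]

/-- `π : O(G) → O(H)` is right-normal: it is a morphism of right
`O(G)`-comodules for the right adjoint coaction, i.e. the right adjoint
coaction descends along `π`. -/
def IsRightNormal (π : H →ₗ[k] B) : Prop :=
  ∃ ρ : B →ₗ[k] B ⊗[k] H, ρ ∘ₗ π = (π.rTensor H) ∘ₗ adR k H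

/-- `π : O(G) → O(H)` is left-normal: the left adjoint coaction descends
along `π`. -/
def IsLeftNormal (π : H →ₗ[k] B) : Prop :=
  ∃ lam : B →ₗ[k] H ⊗[k] B, lam ∘ₗ π = (π.lTensor H) ∘ₗ adL k H

end Hopf

end QG

namespace QG

variable (k : Type u) [Field k]

section Coalg2

variable (C : Type u) [AddCommGroup C] [Module k C] [Coalgebra k C]

/-- A bundled simple right `C`-comodule. -/
structure SimpleComodule where
  V : Type u
  [addCommGroup : AddCommGroup V]
  [module : Module k V]
  ρ : V →ₗ[k] V ⊗[k] C
  isComod : IsComod k C ρ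
  isSimple : IsSimpleComod k C ρ

attribute [instance] SimpleComodule.addCommGroup SimpleComodule.module

/-- A simple comodule `(T, ρT)` is a constituent of a comodule `(V, ρV)`
(over a cosemisimple coalgebra) iff there is a nonzero comodule map `T → V`. -/
def IsConstituent {T V : Type u} [AddCommGroup T] [Module k T]
    [AddCommGroup V] [Module k V]
    (ρT : T →ₗ[k] T ⊗[k] C) (ρV : V →ₗ[k] V ⊗[k] C) : Prop :=
  ∃ f : T →ₗ[k] V, f ≠ 0 ∧ IsComodHom k C ρT ρV f

/-- Isomorphism of (simple) comodules. -/
def comodIsoRel (X Y : SimpleComodule k C) : Prop :=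
  ∃ e : X.V ≃ₗ[k] Y.V, IsComodHom k C X.ρ Y.ρ e.toLinearMap

/-- The set `Ĉ` of isomorphism classes of simple right `C`-comodules. -/
def SimpleComodQuot := Quot (comodIsoRel k C)

/-- The isomorphism class of a simple comodule. -/
def SimpleComodule.cls (X : SimpleComodule k C) : SimpleComodQuot k C :=
  Quot.mk _ X

/-- Group-like elements of a coalgebra; these correspond to the
one-dimensional comodules, i.e. to characters. -/
def IsGroupLike (a : C) : Prop :=
  Coalgebra.counit (R := k) (A := C) a = (1 : k) ∧
    Coalgebra.comul (R := k) (A := C) a = a ⊗ₜ[k] a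

/-- A linear map `φ : C → Z` out of a coalgebra is central if
`φ(x₁) ⊗ x₂ = φ(x₂) ⊗ x₁`. -/
def IsCentralMap {Z : Type u} [AddCommGroup Z] [Module k Z] (φ : C →ₗ[k] Z) : Prop :=
  (φ.rTensor C) ∘ₗ (Coalgebra.comul (R := k) (A := C)) =
    (φ.rTensor C) ∘ₗ (TensorProduct.comm k C C).toLinearMap ∘ₗ
      (Coalgebra.comul (R := k) (A := C))

/-- The simple comodule `X` has "central character" `g` with respect to the
quotient map `γ : C → Z`: corestricted along `γ`, the coaction on `X` is a sum
of copies of the character `g`. -/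
def HasCentralChar {Z : Type u} [AddCommGroup Z] [Module k Z]
    (γ : C →ₗ[k] Z) (X : SimpleComodule k C) (g : Z) : Prop :=
  ∀ v : X.V, cores k C γ X.ρ v = v ⊗ₜ[k] g

end Coalg2

/-- The k-span of the set of products `g * a`, `a ∈ Am`; for `Am` a submodule
this is the left ideal generated by `Am`. -/
def leftIdealGen {G : Type u} [Ring G] [Module k G] (Am : Submodule k G) :
    Submodule k G :=
  Submodule.span k {x : G | ∃ g : G, ∃ a ∈ Am, x = g * a}

end QG

namespace QG

variable (k : Type u) [Field k]
variable (G Hh : Type u) [Ring G] [HopfAlgebra k G] [Ring Hh] [HopfAlgebra k Hh]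

/-- The defining relators of the relative chain group `C(G,H)`: one relator
`g_U (g_V g_W)⁻¹` whenever `hom_H(U, V ⊗ W) ≠ 0`, i.e. whenever the
restrictions to `H` of `U` and `V ⊗ W` are not disjoint. -/
noncomputable def chainRels (π : G →ₐc[k] Hh) :
    Set (FreeGroup (SimpleComodQuot k G)) :=
  {r | ∃ U V W : SimpleComodule k G,
    (∃ f : U.V →ₗ[k] V.V ⊗[k] W.V, f ≠ 0 ∧
      IsComodHom k Hh (cores k G (π : G →ₗ[k] Hh) U.ρ)
        (cores k G (π : G →ₗ[k] Hh) (tensorCoact k G V.ρ W.ρ)) f) ∧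
    r = FreeGroup.of U.cls * (FreeGroup.of V.cls * FreeGroup.of W.cls)⁻¹}

/-- The relative chain group `C(G,H)`: generators `g_V`, `V ∈ Ĝ`, and
relations `g_U = g_V g_W` whenever `U` and `V ⊗ W` are not disjoint over `H`. -/
noncomputable def ChainGroup (π : G →ₐc[k] Hh) : Type (u + 1) :=
  PresentedGroup (chainRels k G Hh π)

noncomputable instance (π : G →ₐc[k] Hh) : Group (ChainGroup k G Hh π) :=
  inferInstanceAs (Group (PresentedGroup (chainRels k G Hh π)))

/-- The generator `g_V` of the chain group attached to `V ∈ Ĝ`. -/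
noncomputable def chainGen (π : G →ₐc[k] Hh) (x : SimpleComodQuot k G) :
    ChainGroup k G Hh π :=
  PresentedGroup.of x

end QG

namespace QGP
open QG
set_option linter.unusedSectionVars false

section A
variable {k : Type u} [Field k]

/-- right slice -/
noncomputable def sl {V C : Type u} [AddCommGroup V] [Module k V] [AddCommGroup C] [Module k C]
    (φ : C →ₗ[k] k) : V ⊗[k] C →ₗ[k] V :=
  (TensorProduct.rid k V).toLinearMap ∘ₗ φ.lTensor V

@[simp] lemma sl_tmul {V C : Type u} [AddCommGroup V] [Module k V] [AddCommGroup C] [Module k C]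
    (φ : C →ₗ[k] k) (v : V) (c : C) : sl φ (v ⊗ₜ[k] c) = φ c • v := by
  simp [sl]

lemma sl_rTensor {V W C : Type u} [AddCommGroup V] [Module k V] [AddCommGroup C] [Module k C]
    [AddCommGroup W] [Module k W]
    (φ : C →ₗ[k] k) (f : V →ₗ[k] W) (t : V ⊗[k] C) : sl φ (f.rTensor C t) = f (sl φ t) := by
  induction t with
  | zero => simp
  | tmul x y => simp
  | add x y hx hy => simp [hx, hy]

lemma sl_lTensor {V C D : Type u} [AddCommGroup V] [Module k V] [AddCommGroup C] [Module k C]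
    [AddCommGroup D] [Module k D]
    (φ : D →ₗ[k] k) (f : C →ₗ[k] D) (t : V ⊗[k] C) :
    sl φ (f.lTensor V t) = sl (φ ∘ₗ f) t := by
  induction t with
  | zero => simp
  | tmul x y => simp
  | add x y hx hy => simp [hx, hy]

lemma sl_sep {V C : Type u} [AddCommGroup V] [Module k V] [AddCommGroup C] [Module k C]
    (t : V ⊗[k] C) (h : ∀ φ : C →ₗ[k] k, sl φ t = 0) : t = 0 := by
  classical
  let b := Module.Free.chooseBasis k C
  apply (TensorProduct.equivFinsuppOfBasisRight (M := V) b).injective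
  rw [map_zero]
  ext i
  have := h (b.coord i)
  rw [Finsupp.zero_apply, ← this]
  clear h this
  induction t with
  | zero => simp
  | tmul x y => simp
  | add x y hx hy => simp [hx, hy]

lemma sl_ext {V C : Type u} [AddCommGroup V] [Module k V] [AddCommGroup C] [Module k C]
    {t s : V ⊗[k] C} (h : ∀ φ : C →ₗ[k] k, sl φ t = sl φ s) : t = s := by
  rw [← sub_eq_zero]
  apply sl_sep
  intro φ
  rw [map_sub, h, sub_self]

lemma mem_range_iff {V C : Type u} [AddCommGroup V] [Module k V] [AddCommGroup C] [Module k C]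
    (U : Submodule k V) (t : V ⊗[k] C) :
    t ∈ LinearMap.range (U.subtype.rTensor C) ↔ ∀ φ : C →ₗ[k] k, sl φ t ∈ U := by
  constructor
  · rintro ⟨s, rfl⟩ φ
    rw [sl_rTensor]
    exact (sl φ s).2
  · intro h
    have hex : Function.Exact (U.subtype.rTensor C) (U.mkQ.rTensor C) :=
      rTensor_exact C (f := U.subtype) (g := U.mkQ) (by
        rw [LinearMap.exact_iff]; simp) (Submodule.mkQ_surjective U)
    refine (hex t).1 ?_
    apply sl_sep
    intro φ
    rw [sl_rTensor]
    simpa using h φ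

/-- both-sided membership -/
lemma mem_range_map {V C : Type u} [AddCommGroup V] [Module k V] [AddCommGroup C] [Module k C]
    (U : Submodule k V) (D : Submodule k C) (t : V ⊗[k] C)
    (h1 : t ∈ LinearMap.range (U.subtype.rTensor C))
    (h2 : t ∈ LinearMap.range (D.subtype.lTensor V)) :
    t ∈ LinearMap.range (TensorProduct.map U.subtype D.subtype) := by
  obtain ⟨p, hp⟩ := LinearMap.exists_leftInverse_of_injective U.subtype (by simp)
  obtain ⟨s, rfl⟩ := h1
  obtain ⟨r, hr⟩ := h2
  refine ⟨TensorProduct.map p LinearMap.id r, ?_⟩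
  have : TensorProduct.map (U.subtype ∘ₗ p) LinearMap.id (D.subtype.lTensor V r) =
      TensorProduct.map (U.subtype ∘ₗ p) LinearMap.id (U.subtype.rTensor C s) := by rw [hr]
  have e1 : TensorProduct.map (U.subtype ∘ₗ p) LinearMap.id (U.subtype.rTensor C s) =
      U.subtype.rTensor C s := by
    rw [LinearMap.rTensor, ← LinearMap.comp_apply, ← TensorProduct.map_comp,
      LinearMap.comp_assoc, hp]
    rfl
  rw [e1] at this
  rw [← this, LinearMap.lTensor, ← LinearMap.comp_apply, ← LinearMap.comp_apply,
    ← TensorProduct.map_comp, ← TensorProduct.map_comp]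
  rfl

variable {C : Type u} [AddCommGroup C] [Module k C] [Coalgebra k C]
variable {V : Type u} [AddCommGroup V] [Module k V]

noncomputable def act {D : Type u} [AddCommGroup D] [Module k D]
    (ρ : V →ₗ[k] V ⊗[k] D) (φ : D →ₗ[k] k) : V →ₗ[k] V := sl φ ∘ₗ ρ

lemma act_apply {D : Type u} [AddCommGroup D] [Module k D]
    (ρ : V →ₗ[k] V ⊗[k] D) (φ : D →ₗ[k] k) (v : V) : act ρ φ v = sl φ (ρ v) := rfl

lemma act_cores {D : Type u} [AddCommGroup D] [Module k D] (π : C →ₗ[k] D)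
    (ρ : V →ₗ[k] V ⊗[k] C) (φ : D →ₗ[k] k) : act (cores k C π ρ) φ = act ρ (φ ∘ₗ π) := by
  ext v
  simp only [act_apply, cores, LinearMap.comp_apply, sl_lTensor]

noncomputable def conv (φ ψ : C →ₗ[k] k) : C →ₗ[k] k :=
  (TensorProduct.lid k k).toLinearMap ∘ₗ TensorProduct.map φ ψ ∘ₗ Coalgebra.comul

lemma act_act {ρ : V →ₗ[k] V ⊗[k] C} (h : IsComod k C ρ) (φ ψ : C →ₗ[k] k) (v : V) :
    act ρ φ (act ρ ψ v) = act ρ (conv φ ψ) v := by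
  have h1 : ∀ t : V ⊗[k] C, act ρ φ (sl ψ t) = sl φ (sl ψ (ρ.rTensor C t)) := by
    intro t
    rw [sl_rTensor]; rfl
  have h2 : ∀ t : V ⊗[k] (C ⊗[k] C), sl φ (sl ψ ((TensorProduct.assoc k V C C).symm t)) =
      sl ((TensorProduct.lid k k).toLinearMap ∘ₗ TensorProduct.map φ ψ) t := by
    intro t
    induction t with
    | zero => simp
    | add x y hx hy => simp only [map_add, hx, hy]
    | tmul x y =>
      induction y with
      | zero => simp
      | add y z hy hz => simp only [TensorProduct.tmul_add, map_add, hy, hz]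
      | tmul y z => simp [smul_smul, mul_comm]
  rw [act_apply ρ ψ, h1, h.coassoc v]
  erw [h2]
  rw [sl_lTensor]
  rfl

lemma act_counit {ρ : V →ₗ[k] V ⊗[k] C} (h : IsComod k C ρ) (v : V) :
    act ρ Coalgebra.counit v = v := h.counit v

lemma isComod_of_act {ρ : V →ₗ[k] V ⊗[k] C}
    (h1 : ∀ (φ ψ : C →ₗ[k] k) (v : V), act ρ φ (act ρ ψ v) = act ρ (conv φ ψ) v)
    (h2 : ∀ v, act ρ Coalgebra.counit v = v) : IsComod k C ρ := by
  refine ⟨fun v => ?_, h2⟩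
  apply sl_ext
  intro ψ
  apply sl_ext
  intro φ
  have h2 : ∀ t : V ⊗[k] (C ⊗[k] C), sl φ (sl ψ ((TensorProduct.assoc k V C C).symm t)) =
      sl ((TensorProduct.lid k k).toLinearMap ∘ₗ TensorProduct.map φ ψ) t := by
    intro t
    induction t with
    | zero => simp
    | add x y hx hy => simp only [map_add, hx, hy]
    | tmul x y =>
      induction y with
      | zero => simp
      | add y z hy hz => simp only [TensorProduct.tmul_add, map_add, hy, hz]
      | tmul y z => simp [smul_smul, mul_comm]
  erw [h2]
  rw [sl_lTensor, sl_rTensor]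
  exact h1 φ ψ v

lemma isSubcomod_iff {ρ : V →ₗ[k] V ⊗[k] C} (U : Submodule k V) :
    IsSubcomod k C ρ U ↔ ∀ φ, ∀ u ∈ U, act ρ φ u ∈ U := by
  constructor
  · intro h φ u hu
    exact (mem_range_iff U _).1 (h u hu) φ
  · intro h u hu
    exact (mem_range_iff U _).2 fun φ => h φ u hu

lemma isComodHom_iff {W : Type u} [AddCommGroup W] [Module k W]
    {ρV : V →ₗ[k] V ⊗[k] C} {ρW : W →ₗ[k] W ⊗[k] C} (f : V →ₗ[k] W) :
    IsComodHom k C ρV ρW f ↔ ∀ φ v, act ρW φ (f v) = f (act ρV φ v) := by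
  constructor
  · intro h φ v
    have h' : ρW (f v) = f.rTensor C (ρV v) := LinearMap.congr_fun h v
    rw [act_apply, h', sl_rTensor]; rfl
  · intro h
    apply LinearMap.ext
    intro v
    apply sl_ext
    intro φ
    rw [LinearMap.comp_apply, LinearMap.comp_apply, sl_rTensor]
    exact h φ v

/-- restriction to subcomodules -/
lemma exists_restrict {ρ : V →ₗ[k] V ⊗[k] C} (U : Submodule k V) (hU : IsSubcomod k C ρ U) :
    ∃ ρU : U →ₗ[k] U ⊗[k] C, ∀ φ (u : U), ((act ρU φ u : U) : V) = act ρ φ u := by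
  have hinj : Function.Injective (U.subtype.rTensor C) :=
    Module.Flat.rTensor_preserves_injective_linearMap _ U.subtype_injective
  let e := LinearEquiv.ofInjective _ hinj
  refine ⟨e.symm.toLinearMap ∘ₗ
    (ρ ∘ₗ U.subtype).codRestrict (LinearMap.range (U.subtype.rTensor C)) (fun u => hU u u.2), ?_⟩
  intro φ u
  have key : ∀ s, U.subtype.rTensor C (e.symm s) = s := fun s => by
    have := e.apply_symm_apply s
    exact congrArg Subtype.val this
  rw [act_apply, act_apply]
  change U.subtype (sl φ _) = _
  rw [← sl_rTensor]
  simp only [LinearMap.comp_apply]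
  erw [key]
  rfl

lemma exists_simple {ρ : V →ₗ[k] V ⊗[k] C} (hρ : IsComod k C ρ) (U : Submodule k V)
    (hU : IsSimpleSubcomod k C ρ U) :
    ∃ ρU : U →ₗ[k] U ⊗[k] C, (∀ φ (u : U), ((act ρU φ u : U) : V) = act ρ φ u) ∧
      IsComod k C ρU ∧ IsSimpleComod k C ρU := by
  obtain ⟨ρU, h⟩ := exists_restrict U hU.1
  refine ⟨ρU, h, isComod_of_act ?_ ?_, ?_, ?_, ?_⟩
  · intro φ ψ v
    apply Subtype.ext
    rw [h, h, h, act_act hρ]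
  · intro v
    apply Subtype.ext
    rw [h, act_counit hρ]
  · rw [isSubcomod_iff]; intros; trivial
  · intro h0
    apply hU.2.1
    rw [Submodule.eq_bot_iff]
    intro x hx
    have : (⟨x, hx⟩ : U) ∈ (⊤ : Submodule k U) := trivial
    rw [h0] at this
    exact congrArg Subtype.val ((Submodule.mem_bot k).1 this)
  · intro U' _ hU'
    rw [isSubcomod_iff] at hU'
    have := hU.2.2 (U'.map U.subtype) (Submodule.map_subtype_le U U') (by
      rw [isSubcomod_iff]
      rintro φ _ ⟨u, hu, rfl⟩
      exact ⟨act ρU φ u, hU' φ u hu, h φ u⟩)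
    rcases this with h0 | h0
    · left
      rw [Submodule.eq_bot_iff]
      intro x hx
      have hx' : (x : V) ∈ U'.map U.subtype := ⟨x, hx, rfl⟩
      rw [h0] at hx'
      exact Subtype.ext ((Submodule.mem_bot k).1 hx')
    · right
      rw [eq_top_iff]
      intro x _
      have hx : (x : V) ∈ U'.map U.subtype := by rw [h0]; exact x.2
      obtain ⟨y, hy, hxy⟩ := hx
      have : y = x := Subtype.ext hxy
      rwa [← this]

end A

section B
variable {k : Type u} [Field k]
variable {C : Type u} [AddCommGroup C] [Module k C] [Coalgebra k C]
variable {V : Type u} [AddCommGroup V] [Module k V]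

noncomputable def slL {V C : Type u} [AddCommGroup V] [Module k V] [AddCommGroup C] [Module k C]
    (f : V →ₗ[k] k) : V ⊗[k] C →ₗ[k] C :=
  (TensorProduct.lid k C).toLinearMap ∘ₗ f.rTensor C

@[simp] lemma slL_tmul {V C : Type u} [AddCommGroup V] [Module k V] [AddCommGroup C] [Module k C]
    (f : V →ₗ[k] k) (v : V) (c : C) : slL f (v ⊗ₜ[k] c) = f v • c := by
  simp [slL]

lemma apply_slL {V C : Type u} [AddCommGroup V] [Module k V] [AddCommGroup C] [Module k C]
    (f : V →ₗ[k] k) (ω : C →ₗ[k] k) (t : V ⊗[k] C) : ω (slL f t) = f (sl ω t) := by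
  induction t with
  | zero => simp
  | tmul x y => simp [mul_comm]
  | add x y hx hy => simp only [map_add, hx, hy]

lemma dual_ext {V : Type u} [AddCommGroup V] [Module k V] {x y : V}
    (h : ∀ f : V →ₗ[k] k, f x = f y) : x = y := by
  rw [← sub_eq_zero, ← Module.forall_dual_apply_eq_zero_iff k]
  intro f
  rw [map_sub, h, sub_self]

/-- action as linear map in the functional -/
noncomputable def orb (ρ : V →ₗ[k] V ⊗[k] C) (v : V) : (C →ₗ[k] k) →ₗ[k] V where
  toFun φ := act ρ φ v
  map_add' φ ψ := by simp [act_apply, sl, LinearMap.lTensor_add]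
  map_smul' a φ := by simp [act_apply, sl, LinearMap.lTensor_smul]

lemma sl_finite (t : V ⊗[k] C) :
    ∃ P : Submodule k V, Module.Finite k P ∧ ∀ φ : C →ₗ[k] k, sl φ t ∈ P := by
  induction t with
  | zero => exact ⟨⊥, inferInstance, fun φ => by simp⟩
  | tmul x y =>
    exact ⟨k ∙ x, inferInstance, fun φ => by
      rw [sl_tmul]; exact Submodule.smul_mem _ _ (Submodule.mem_span_singleton_self x)⟩
  | add x y hx hy =>
    obtain ⟨P, h1, h2⟩ := hx
    obtain ⟨Q, h3, h4⟩ := hy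
    exact ⟨P ⊔ Q, inferInstance, fun φ => by
      rw [map_add]
      exact Submodule.add_mem_sup (h2 φ) (h4 φ)⟩

lemma exists_ne (X : SimpleComodule k C) : ∃ v : X.V, v ≠ 0 := by
  have := X.isSimple.2.1
  obtain ⟨v, _, hv⟩ := Submodule.exists_mem_ne_zero_of_ne_bot this
  exact ⟨v, hv⟩

lemma simple_eq_top (X : SimpleComodule k C) (U : Submodule k X.V)
    (h : ∀ φ, ∀ u ∈ U, act X.ρ φ u ∈ U) (v : X.V) (hv : v ∈ U) (hv0 : v ≠ 0) : U = ⊤ := by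
  rcases X.isSimple.2.2 U le_top ((isSubcomod_iff U).2 h) with h0 | h0
  · rw [h0] at hv
    exact absurd ((Submodule.mem_bot k).1 hv) hv0
  · exact h0

lemma simple_finite (X : SimpleComodule k C) : Module.Finite k X.V := by
  obtain ⟨v, hv⟩ := exists_ne X
  have htop : LinearMap.range (orb X.ρ v) = ⊤ := by
    refine simple_eq_top X _ ?_ v ⟨Coalgebra.counit, act_counit X.isComod v⟩ hv
    rintro φ _ ⟨ψ, rfl⟩
    exact ⟨conv φ ψ, (act_act X.isComod φ ψ v).symm⟩
  obtain ⟨P, h1, h2⟩ := sl_finite (X.ρ v)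
  have : P = ⊤ := by
    rw [eq_top_iff, ← htop]
    rintro _ ⟨φ, rfl⟩
    exact h2 φ
  subst this
  exact Module.finite_def.2 (Submodule.fg_top _ |>.1 (Module.finite_def.1 h1))

lemma schur [IsAlgClosed k] (X : SimpleComodule k C) (T : X.V →ₗ[k] X.V)
    (hT : ∀ φ v, act X.ρ φ (T v) = T (act X.ρ φ v)) : ∃ c : k, ∀ v, T v = c • v := by
  have := simple_finite X
  obtain ⟨v, hv⟩ := exists_ne X
  have : Nontrivial X.V := ⟨v, 0, hv⟩
  obtain ⟨c, hc⟩ := Module.End.exists_eigenvalue T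
  obtain ⟨w, hw⟩ := hc.exists_hasEigenvector
  refine ⟨c, fun u => ?_⟩
  have htop := simple_eq_top X (LinearMap.ker (T - c • LinearMap.id)) (by
    intro φ u hu
    simp only [LinearMap.mem_ker, LinearMap.sub_apply, LinearMap.smul_apply, LinearMap.id_apply,
      sub_eq_zero] at hu ⊢
    rw [← hT, hu, map_smul]) w (by
      simp [hw.apply_eq_smul]) hw.2
  have hu : u ∈ LinearMap.ker (T - c • LinearMap.id) := by rw [htop]; trivial
  simpa [sub_eq_zero] using hu

lemma hasCentralChar_iff {Z : Type u} [AddCommGroup Z] [Module k Z]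
    (γ : C →ₗ[k] Z) (X : SimpleComodule k C) (g : Z) :
    HasCentralChar k C γ X g ↔ ∀ (ω : Z →ₗ[k] k) v, act X.ρ (ω ∘ₗ γ) v = ω g • v := by
  constructor
  · intro h ω v
    rw [← act_cores, act_apply, h v, sl_tmul]
  · intro h v
    apply sl_ext
    intro ω
    rw [sl_tmul, ← h ω v, ← act_cores]
    rfl

lemma conv_central {Z : Type u} [AddCommGroup Z] [Module k Z]
    (γ : C →ₗ[k] Z) (hγ : IsCentralMap k C γ) (ω : Z →ₗ[k] k) (φ : C →ₗ[k] k) :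
    conv (ω ∘ₗ γ) φ = conv φ (ω ∘ₗ γ) := by
  have e1 : ∀ t : C ⊗[k] C, TensorProduct.lid k k (TensorProduct.map (ω ∘ₗ γ) φ t) =
      TensorProduct.lid k k (TensorProduct.map ω φ (γ.rTensor C t)) := by
    intro t
    rw [LinearMap.rTensor, ← LinearMap.comp_apply (TensorProduct.map _ _),
      ← TensorProduct.map_comp]; rfl
  have e2 : ∀ t : C ⊗[k] C, TensorProduct.lid k k (TensorProduct.map φ (ω ∘ₗ γ) t) =
      TensorProduct.lid k k (TensorProduct.map (ω ∘ₗ γ) φ (TensorProduct.comm k C C t)) := by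
    intro t
    induction t with
    | zero => simp
    | tmul x y => simp [mul_comm]
    | add x y hx hy => simp only [map_add, hx, hy]
  ext x
  change TensorProduct.lid k k (TensorProduct.map (ω ∘ₗ γ) φ (Coalgebra.comul x)) =
    TensorProduct.lid k k (TensorProduct.map φ (ω ∘ₗ γ) (Coalgebra.comul x))
  rw [e2, e1, e1]
  have := LinearMap.congr_fun hγ x
  simp only [LinearMap.comp_apply] at this
  rw [this]
  rfl

lemma exists_char [IsAlgClosed k] {Z : Type u} [AddCommGroup Z] [Module k Z]
    (γ : C →ₗ[k] Z) (hγ : IsCentralMap k C γ) (X : SimpleComodule k C) :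
    ∃ g, HasCentralChar k C γ X g := by
  have h1 : ∀ ω : Z →ₗ[k] k, ∃ c : k, ∀ v, act X.ρ (ω ∘ₗ γ) v = c • v := by
    intro ω
    apply schur
    intro φ v
    rw [act_act X.isComod, act_act X.isComod, conv_central γ hγ]
  choose c hc using h1
  obtain ⟨v, hv⟩ := exists_ne X
  obtain ⟨f, hf⟩ := Module.Projective.exists_dual_eq_one k hv
  refine ⟨slL f (cores k C γ X.ρ v), (hasCentralChar_iff _ _ _).2 fun ω w => ?_⟩
  rw [apply_slL, ← act_apply, act_cores, hc ω v, map_smul, hf, hc ω w]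
  simp

lemma conv_comp {D : Type u} [AddCommGroup D] [Module k D] [Coalgebra k D]
    (γ : C →ₗc[k] D) (ω ω' : D →ₗ[k] k) :
    conv (ω ∘ₗ γ.toLinearMap) (ω' ∘ₗ γ.toLinearMap) = conv ω ω' ∘ₗ γ.toLinearMap := by
  ext x
  simp only [conv, LinearMap.comp_apply]
  rw [TensorProduct.map_comp, LinearMap.comp_apply]
  congr 2
  exact LinearMap.congr_fun γ.map_comp_comul x

lemma char_groupLike {D : Type u} [AddCommGroup D] [Module k D] [Coalgebra k D]
    (γ : C →ₗc[k] D) (X : SimpleComodule k C) (g : D)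
    (h : HasCentralChar k C γ.toLinearMap X g) : IsGroupLikeElem k g := by
  rw [hasCentralChar_iff] at h
  obtain ⟨v, hv⟩ := exists_ne X
  constructor
  · have h1 := h Coalgebra.counit v
    rw [γ.counit_comp, act_counit X.isComod] at h1
    exact (smul_left_injective k hv (by simpa using h1)).symm
  · apply sl_ext
    intro ω'
    apply dual_ext (k := k)
    intro ω
    have h1 : ω (sl ω' (Coalgebra.comul g)) = conv ω ω' g := by
      have : ∀ t : D ⊗[k] D, ω (sl ω' t) = TensorProduct.lid k k (TensorProduct.map ω ω' t) := by
        intro t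
        induction t with
        | zero => simp
        | tmul x y => simp [mul_comm]
        | add x y hx hy => simp only [map_add, hx, hy]
      exact this _
    have h2 := h (conv ω ω') v
    rw [← conv_comp, ← act_act X.isComod, h, h, smul_smul] at h2
    have h3 := smul_left_injective k hv h2
    rw [h1, ← h3, sl_tmul, map_smul, smul_eq_mul, mul_comm]
end B

section Cc
variable {k : Type u} [Field k]
variable {C : Type u} [AddCommGroup C] [Module k C] [Coalgebra k C]
variable {M : Type u} [AddCommGroup M] [Module k M]
variable {N : Type u} [AddCommGroup N] [Module k N]

lemma exists_proj {ι : Type u} (W : ι → Submodule k N) (hi : iSupIndep W) (ht : (⨆ i, W i) = ⊤) :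
    ∃ p : ∀ i, N →ₗ[k] N, (∀ i x, p i x ∈ W i) ∧ (∀ i, ∀ x ∈ W i, p i x = x) ∧
      (∀ i j, i ≠ j → ∀ x ∈ W j, p i x = 0) ∧ ∀ x, x ≠ 0 → ∃ i, p i x ≠ 0 := by
  classical
  have hint : DirectSum.IsInternal W :=
    DirectSum.isInternal_submodule_of_iSupIndep_of_iSup_eq_top hi ht
  let e := LinearEquiv.ofBijective (DirectSum.coeLinearMap W) hint
  refine ⟨fun i => (W i).subtype ∘ₗ DirectSum.component k ι (fun i => W i) i ∘ₗ e.symm.toLinearMap,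
    ?_, ?_, ?_, ?_⟩
  · intro i x
    exact (DirectSum.component k ι (fun i => W i) i (e.symm x)).2
  · intro i x hx
    exact congrArg Subtype.val (DirectSum.IsInternal.ofBijective_coeLinearMap_same hint ⟨x, hx⟩)
  · intro i j hij x hx
    exact congrArg Subtype.val
      (DirectSum.IsInternal.ofBijective_coeLinearMap_of_ne hint hij.symm ⟨x, hx⟩)
  · intro x hx
    by_contra hcon
    push Not at hcon
    apply hx
    have : e.symm x = 0 := by
      refine DFinsupp.ext fun i => ?_
      exact Subtype.ext (hcon i)
    simpa using this

lemma exists_back (hC : IsCosemisimple k C) {ρM : M →ₗ[k] M ⊗[k] C} {ρN : N →ₗ[k] N ⊗[k] C}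
    (hM : IsComod k C ρM) (hN : IsComod k C ρN) (F : M →ₗ[k] N)
    (hF : ∀ φ v, act ρN φ (F v) = F (act ρM φ v)) (hF0 : F ≠ 0) :
    ∃ q : N →ₗ[k] M, (∀ φ v, act ρM φ (q v) = q (act ρN φ v)) ∧ ∃ x, q (F x) ≠ 0 := by
  obtain ⟨ι, U, hU, -, hUt⟩ := hC M ρM hM
  obtain ⟨κ, W, hW, hWi, hWt⟩ := hC N ρN hN
  obtain ⟨p, hp1, hp2, hp3, hp4⟩ := exists_proj W hWi hWt
  have hWs : ∀ i φ, ∀ x ∈ W i, act ρN φ x ∈ W i := fun i => (isSubcomod_iff _).1 (hW i).1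
  have hpc : ∀ i φ x, act ρN φ (p i x) = p i (act ρN φ x) := by
    intro i φ x
    have hx : x ∈ ⨆ i, W i := by rw [hWt]; trivial
    induction hx using Submodule.iSup_induction' with
    | mem j x hx =>
      by_cases hij : i = j
      · subst hij
        rw [hp2 i x hx, hp2 i _ (hWs i φ x hx)]
      · rw [hp3 i j hij x hx, hp3 i j hij _ (hWs j φ x hx), map_zero]
    | zero => simp
    | add x y _ _ hx hy => simp only [map_add, hx, hy]
  have hex : ∃ j, ∃ u ∈ U j, F u ≠ 0 := by
    by_contra hcon
    push Not at hcon
    apply hF0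
    ext x
    have hx : x ∈ ⨆ i, U i := by rw [hUt]; trivial
    have hle : (⨆ i, U i) ≤ LinearMap.ker F := iSup_le fun j u hu => hcon j u hu
    exact hle hx
  obtain ⟨j, u, hu, hFu⟩ := hex
  obtain ⟨i, hi⟩ := hp4 _ hFu
  have hUs : ∀ φ, ∀ x ∈ U j, act ρM φ x ∈ U j := (isSubcomod_iff _).1 (hU j).1
  let E : M →ₗ[k] N := p i ∘ₗ F
  have hE : ∀ φ v, act ρN φ (E v) = E (act ρM φ v) := by
    intro φ v
    change act ρN φ (p i (F v)) = p i (F (act ρM φ v))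
    rw [hpc, hF]
  have hker : ∀ x ∈ U j, E x = 0 → x = 0 := by
    have h1 := (hU j).2.2 (U j ⊓ LinearMap.ker E) inf_le_left (by
      rw [isSubcomod_iff]
      rintro φ x ⟨hx, hx'⟩
      refine ⟨hUs φ x hx, ?_⟩
      change E _ = 0
      rw [← hE, LinearMap.mem_ker.1 hx', map_zero])
    rcases h1 with h1 | h1
    · intro x hx hx'
      have : x ∈ U j ⊓ LinearMap.ker E := ⟨hx, hx'⟩
      rw [h1] at this
      exact (Submodule.mem_bot k).1 this
    · exfalso
      have : u ∈ U j ⊓ LinearMap.ker E := by rw [h1]; exact hu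
      exact hi this.2
  have him : (U j).map E = W i := by
    have h1 := (hW i).2.2 ((U j).map E) (by
      rintro _ ⟨x, _, rfl⟩
      exact hp1 i _) (by
      rw [isSubcomod_iff]
      rintro φ _ ⟨x, hx, rfl⟩
      exact ⟨_, hUs φ x hx, (hE φ x).symm⟩)
    rcases h1 with h1 | h1
    · exfalso
      have : E u ∈ (U j).map E := ⟨u, hu, rfl⟩
      rw [h1] at this
      exact hi ((Submodule.mem_bot k).1 this)
    · exact h1
  let E' : U j →ₗ[k] W i := (E ∘ₗ (U j).subtype).codRestrict (W i) (fun x => hp1 i _)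
  have hbij : Function.Bijective E' := by
    constructor
    · rw [← LinearMap.ker_eq_bot, LinearMap.ker_eq_bot']
      intro x hx
      exact Subtype.ext (hker x x.2 (congrArg Subtype.val hx))
    · intro y
      have hy : (y : N) ∈ (U j).map E := by rw [him]; exact y.2
      obtain ⟨x, hx, hxy⟩ := hy
      exact ⟨⟨x, hx⟩, Subtype.ext hxy⟩
  let e := LinearEquiv.ofBijective E' hbij
  have hqs : ∀ y, E (e.symm ⟨p i y, hp1 i y⟩) = p i y := fun y =>
    congrArg Subtype.val (e.apply_symm_apply ⟨p i y, hp1 i y⟩)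
  refine ⟨(U j).subtype ∘ₗ e.symm.toLinearMap ∘ₗ (p i).codRestrict (W i) (hp1 i), ?_, u, ?_⟩
  · intro φ y
    change act ρM φ (e.symm ⟨p i y, hp1 i y⟩ : M) = (e.symm ⟨p i _, hp1 i _⟩ : M)
    rw [← sub_eq_zero]
    apply hker
    · exact sub_mem (hUs _ _ (e.symm _).2) (e.symm _).2
    · rw [map_sub, ← hE, hqs, hqs, hpc, sub_self]
  · intro h0
    change (e.symm ⟨p i (F u), hp1 i _⟩ : M) = 0 at h0
    have := hqs (F u)
    rw [h0, map_zero] at this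
    exact hi this.symm

lemma comul_isComod : IsComod k C (Coalgebra.comul (R := k) (A := C)) := by
  constructor
  · intro v
    exact (Coalgebra.coassoc_symm_apply v).symm
  · intro v
    rw [Coalgebra.lTensor_counit_comul]
    simp

/-- coefficient maps -/
lemma act_coeff {ρ : M →ₗ[k] M ⊗[k] C} (h : IsComod k C ρ) (f : M →ₗ[k] k) (φ : C →ₗ[k] k)
    (x : M) :
    act (Coalgebra.comul (R := k) (A := C)) φ (slL f (ρ x)) = slL f (ρ (act ρ φ x)) := by
  apply dual_ext (k := k)
  intro ψ
  rw [apply_slL, ← act_apply, act_act h]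
  have : ∀ c : C, ψ (act (Coalgebra.comul (R := k) (A := C)) φ c) = conv ψ φ c := by
    intro c
    have : ∀ t : C ⊗[k] C, ψ (sl φ t) = TensorProduct.lid k k (TensorProduct.map ψ φ t) := by
      intro t
      induction t with
      | zero => simp
      | tmul x y => simp [mul_comm]
      | add x y hx hy => simp only [map_add, hx, hy]
    exact this _
  rw [this, apply_slL]
  rfl

lemma counit_coeff {ρ : M →ₗ[k] M ⊗[k] C} (h : IsComod k C ρ) (f : M →ₗ[k] k) (x : M) :
    Coalgebra.counit (R := k) (slL f (ρ x)) = f x := by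
  rw [apply_slL, ← act_apply, act_counit h]

lemma isComod_cores {D : Type u} [AddCommGroup D] [Module k D] [Coalgebra k D]
    (γ : C →ₗc[k] D) {ρ : M →ₗ[k] M ⊗[k] C} (h : IsComod k C ρ) :
    IsComod k D (cores k C γ.toLinearMap ρ) := by
  apply isComod_of_act
  · intro φ ψ v
    rw [act_cores, act_cores, act_cores, act_act h, conv_comp]
  · intro v
    rw [act_cores, γ.counit_comp, act_counit h]

lemma act_map {D : Type u} [AddCommGroup D] [Module k D] [Coalgebra k D]
    (γ : C →ₗc[k] D) (φ : D →ₗ[k] k) (x : C) :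
    act (Coalgebra.comul (R := k) (A := D)) φ (γ x) =
      γ (act (Coalgebra.comul (R := k) (A := C)) (φ ∘ₗ γ.toLinearMap) x) := by
  have h := LinearMap.congr_fun γ.map_comp_comul x
  rw [act_apply, act_apply]
  have h' : Coalgebra.comul (R := k) (γ x) =
    TensorProduct.map γ.toLinearMap γ.toLinearMap (Coalgebra.comul (R := k) x) := h.symm
  rw [h']
  generalize (Coalgebra.comul (R := k) x) = t
  induction t with
  | zero => simp
  | tmul x y => simp
  | add x y hx hy => simp only [map_add, hx, hy]

end Cc

section Dd
variable {k : Type u} [Field k]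

lemma mem_range_iffL {V C : Type u} [AddCommGroup V] [Module k V] [AddCommGroup C] [Module k C]
    (D : Submodule k C) (t : V ⊗[k] C)
    (h : ∀ f : V →ₗ[k] k, slL f t ∈ D) : t ∈ LinearMap.range (D.subtype.lTensor V) := by
  have h1 : TensorProduct.comm k V C t ∈ LinearMap.range (D.subtype.rTensor V) := by
    rw [mem_range_iff]
    intro f
    have : sl f (TensorProduct.comm k V C t) = slL f t := by
      clear h
      induction t with
      | zero => simp
      | tmul x y => simp
      | add x y hx hy => simp only [map_add, hx, hy]
    rw [this]
    exact h f
  obtain ⟨s, hs⟩ := h1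
  refine ⟨TensorProduct.comm k _ _ s, ?_⟩
  have : ∀ s : D ⊗[k] V, D.subtype.lTensor V (TensorProduct.comm k _ _ s) =
      (TensorProduct.comm k V C).symm (D.subtype.rTensor V s) := by
    intro s
    induction s with
    | zero => simp
    | tmul x y => simp
    | add x y hx hy => simp only [map_add, hx, hy]
  rw [this, hs]
  simp

section coalg
variable {C : Type u} [AddCommGroup C] [Module k C] [Coalgebra k C]

lemma sl_slL (φ ψ : C →ₗ[k] k) (t : C ⊗[k] C) : φ (slL ψ t) = ψ (sl φ t) := apply_slL ψ φ t

lemma counit_act (φ : C →ₗ[k] k) (x : C) :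
    Coalgebra.counit (R := k) (act (Coalgebra.comul (R := k) (A := C)) φ x) = φ x := by
  rw [act_apply, ← sl_slL]
  congr 1
  simp only [slL, LinearMap.comp_apply, Coalgebra.rTensor_counit_comul]
  simp

lemma slL_counit (x : C) :
    slL (Coalgebra.counit (R := k)) (Coalgebra.comul (R := k) x) = x := by
  simp only [slL, LinearMap.comp_apply, Coalgebra.rTensor_counit_comul]
  simp

end coalg

variable {G : Type u} [Ring G] [HopfAlgebra k G]
variable {Z : Type u} [Ring Z] [HopfAlgebra k Z]
variable {H : Type u} [Ring H] [HopfAlgebra k H]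

noncomputable def LL (ζ : G →ₐc[k] Z) : G →ₐ[k] G ⊗[k] Z :=
  (Algebra.TensorProduct.map (AlgHom.id k G) (ζ : G →ₐ[k] Z)).comp (Bialgebra.comulAlgHom k G)

lemma LL_apply (ζ : G →ₐc[k] Z) (x : G) :
    LL ζ x = (ζ : G →ₗ[k] Z).lTensor G (Coalgebra.comul (R := k) x) := rfl

noncomputable def gr (ζ : G →ₐc[k] Z) (g : Z) : Submodule k G :=
  LinearMap.ker ((LL ζ).toLinearMap - (TensorProduct.mk k G Z).flip g)

lemma mem_gr (ζ : G →ₐc[k] Z) (g : Z) (x : G) : x ∈ gr ζ g ↔ LL ζ x = x ⊗ₜ g := by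
  simp [gr, sub_eq_zero]

lemma mem_gr' (ζ : G →ₐc[k] Z) (g : Z) (x : G) : x ∈ gr ζ g ↔
    ∀ ω : Z →ₗ[k] k, act (Coalgebra.comul (R := k) (A := G)) (ω ∘ₗ (ζ : G →ₗ[k] Z)) x
      = ω g • x := by
  rw [mem_gr, LL_apply]
  constructor
  · intro h ω
    rw [act_apply, ← sl_lTensor, h, sl_tmul]
  · intro h
    apply sl_ext
    intro ω
    rw [sl_tmul, sl_lTensor, ← h ω, act_apply]

lemma gr_one (ζ : G →ₐc[k] Z) : (1 : G) ∈ gr ζ 1 := by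
  rw [mem_gr, map_one]; rfl

lemma gr_mul (ζ : G →ₐc[k] Z) {g h : Z} {x y : G} (hx : x ∈ gr ζ g) (hy : y ∈ gr ζ h) :
    x * y ∈ gr ζ (g * h) := by
  rw [mem_gr] at *
  rw [map_mul, hx, hy, Algebra.TensorProduct.tmul_mul_tmul]

lemma gr_act (ζ : G →ₐc[k] Z) (hζ : IsCentralMap k G (ζ : G →ₗ[k] Z)) {g : Z} {x : G}
    (hx : x ∈ gr ζ g) (φ : G →ₗ[k] k) :
    act (Coalgebra.comul (R := k) (A := G)) φ x ∈ gr ζ g := by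
  rw [mem_gr'] at *
  intro ω
  rw [act_act comul_isComod, conv_central _ hζ, ← act_act comul_isComod, hx, map_smul]

lemma gr_slL (ζ : G →ₐc[k] Z) {g : Z} {x : G}
    (hx : x ∈ gr ζ g) (φ : G →ₗ[k] k) :
    slL φ (Coalgebra.comul (R := k) x) ∈ gr ζ g := by
  rw [mem_gr'] at *
  intro ω
  rw [act_coeff comul_isComod, hx, map_smul, map_smul]

lemma gr_comul (ζ : G →ₐc[k] Z) (hζ : IsCentralMap k G (ζ : G →ₗ[k] Z)) {g : Z} {x : G}
    (hx : x ∈ gr ζ g) : Coalgebra.comul (R := k) x ∈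
      LinearMap.range (TensorProduct.map (gr ζ g).subtype (gr ζ g).subtype) := by
  apply mem_range_map
  · rw [mem_range_iff]
    exact gr_act ζ hζ hx
  · apply mem_range_iffL
    exact gr_slL ζ hx

lemma gr_zeta (ζ : G →ₐc[k] Z) {g : Z} {x : G} (hx : x ∈ gr ζ g) :
    ζ x = Coalgebra.counit (R := k) x • g := by
  apply dual_ext (k := k)
  intro ω
  rw [mem_gr'] at hx
  have := congrArg (Coalgebra.counit (R := k)) (hx ω)
  rw [counit_act] at this
  rw [map_smul, smul_eq_mul, mul_comm]
  rw [map_smul, smul_eq_mul] at this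
  exact this

lemma gr_span [IsAlgClosed k] (ζ : G →ₐc[k] Z) (hζ : IsCentralMap k G (ζ : G →ₗ[k] Z))
    (hG : IsCosemisimple k G) : (⨆ g : GroupLike k Z, gr ζ g.val) = ⊤ := by
  obtain ⟨ι, U, hU, -, hUt⟩ := hG G _ comul_isComod
  rw [eq_top_iff, ← hUt]
  refine iSup_le fun i => ?_
  obtain ⟨ρU, h1, h2, h3⟩ := exists_simple comul_isComod (U i) (hU i)
  let X : SimpleComodule k G := ⟨U i, ρU, h2, h3⟩
  obtain ⟨g, hg⟩ := exists_char _ hζ X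
  have hgl : IsGroupLikeElem k g := char_groupLike (ζ : G →ₗc[k] Z) X g hg
  refine le_trans ?_ (le_iSup (fun g : GroupLike k Z => gr ζ g.val) ⟨g, hgl⟩)
  intro u hu
  rw [mem_gr']
  intro ω
  rw [hasCentralChar_iff] at hg
  have := hg ω (⟨u, hu⟩ : U i)
  have h4 := h1 (ω ∘ₗ (ζ : G →ₗ[k] Z)) ⟨u, hu⟩
  rw [← h4]
  exact congrArg Subtype.val this

open LinearMap WithConv in
lemma conv_left_inv {B : Type u} [Ring B] [Algebra k B] (f : G →ₐ[k] B) :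
    toConv (f.toLinearMap ∘ₗ HopfAlgebra.antipode k) * toConv f.toLinearMap = 1 := by
  have := algHom_comp_convMul_distrib f
    (toConv (HopfAlgebra.antipode k (A := G))) (toConv id)
  rw [antipode_mul_id] at this
  apply WithConv.ext
  refine Eq.trans this.symm ?_
  ext x
  simp [LinearMap.convOne_def]

open LinearMap WithConv in
lemma antipode_hom (π : G →ₐc[k] H) (x : G) :
    π (HopfAlgebra.antipode k x) = HopfAlgebra.antipode k (π x) := by
  have h1 := conv_left_inv (π : G →ₐ[k] H)
  have h2 : toConv ((π : G →ₐ[k] H).toLinearMap) *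
      toConv (HopfAlgebra.antipode k ∘ₗ (π : G →ₐ[k] H).toLinearMap) = 1 := by
    have := convMul_comp_coalgHom_distrib
      (toConv id) (toConv (HopfAlgebra.antipode k (A := H))) (π : G →ₗc[k] H)
    rw [id_mul_antipode] at this
    apply WithConv.ext
    refine Eq.trans this.symm ?_
    ext x
    simp [LinearMap.convOne_def]
  have := left_inv_eq_right_inv h1 h2
  have := LinearMap.congr_fun (congrArg WithConv.ofConv this) x
  exact this

open LinearMap WithConv in
lemma gr_antipode [IsAlgClosed k] (ζ : G →ₐc[k] Z) (hζ : IsCentralMap k G (ζ : G →ₗ[k] Z))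
    (hG : IsCosemisimple k G) (g : GroupLike k Z) {x : G} (hx : x ∈ gr ζ g.val) :
    HopfAlgebra.antipode k x ∈ gr ζ (g⁻¹).val := by
  let c : G →ₗ[k] G ⊗[k] Z := TensorProduct.map (HopfAlgebra.antipode k) (HopfAlgebra.antipode k)
    ∘ₗ (LL ζ).toLinearMap
  have hc : ∀ (h : GroupLike k Z) (y : G), y ∈ gr ζ h.val →
      c y = HopfAlgebra.antipode k y ⊗ₜ (h⁻¹).val := by
    intro h y hy
    have : LL ζ y = y ⊗ₜ h.val := (mem_gr _ _ _).1 hy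
    change TensorProduct.map _ _ (LL ζ y) = _
    rw [this]
    simp
  have h2 : toConv (LL ζ).toLinearMap * toConv c = 1 := by
    ext x
    have hx : x ∈ ⨆ g : GroupLike k Z, gr ζ g.val := by rw [gr_span ζ hζ hG]; trivial
    induction hx using Submodule.iSup_induction' with
    | mem h y hy =>
      rw [convMul_apply, convOne_apply]
      obtain ⟨t, ht⟩ := gr_comul ζ hζ hy
      have key : ∀ t : gr ζ h.val ⊗[k] gr ζ h.val,
          mul' k (G ⊗[k] Z) (TensorProduct.map (LL ζ).toLinearMap c
            (TensorProduct.map (gr ζ h.val).subtype (gr ζ h.val).subtype t)) =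
          mul' k G ((HopfAlgebra.antipode k).lTensor G
            (TensorProduct.map (gr ζ h.val).subtype (gr ζ h.val).subtype t)) ⊗ₜ[k] (1 : Z) := by
        intro t
        induction t with
        | zero => simp
        | add a b ha hb => simp only [map_add, ha, hb, TensorProduct.add_tmul]
        | tmul a b =>
          have h1 : LL ζ (a : G) = (a : G) ⊗ₜ h.val := (mem_gr _ _ _).1 a.2
          have h3 : h.val * (h⁻¹).val = 1 := by
            rw [← GroupLike.val_mul, mul_inv_cancel]; rfl
          simp only [TensorProduct.map_tmul, Submodule.subtype_apply, AlgHom.toLinearMap_apply,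
            hc h b b.2, h1, mul'_apply, Algebra.TensorProduct.tmul_mul_tmul, h3, lTensor_tmul]
      have := key t
      rw [ht, HopfAlgebra.mul_antipode_lTensor_comul_apply] at this
      refine Eq.trans this ?_
      rw [Algebra.TensorProduct.algebraMap_apply]
    | zero => simp
    | add a b _ _ ha hb => simp only [map_add, ha, hb]
  have := left_inv_eq_right_inv (conv_left_inv (LL ζ)) h2
  have := LinearMap.congr_fun (congrArg WithConv.ofConv this) x
  rw [mem_gr, ← hc g x hx]
  exact this

end Dd

section Ee
variable {k : Type u} [Field k]

section coalg
variable {C : Type u} [AddCommGroup C] [Module k C] [Coalgebra k C]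

lemma exists_functional (A B : Submodule k C) (h : Disjoint A B) (e : C →ₗ[k] k) :
    ∃ ψ : C →ₗ[k] k, (∀ x ∈ A, ψ x = e x) ∧ ∀ x ∈ B, ψ x = 0 := by
  obtain ⟨A', hA, hc⟩ := h.exists_isCompl
  refine ⟨LinearMap.ofIsCompl hc (e ∘ₗ A'.subtype) 0, ?_, ?_⟩
  · intro x hx
    exact LinearMap.ofIsCompl_apply_left hc ⟨x, hA hx⟩
  · intro x hx
    exact LinearMap.ofIsCompl_apply_right hc ⟨x, hx⟩

lemma disj_finset {ι : Type u} [DecidableEq ι] (D : ι → Submodule k C)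
    (hact : ∀ i, ∀ x ∈ D i, ∀ φ, act (Coalgebra.comul (R := k) (A := C)) φ x ∈ D i)
    (hsl : ∀ i, ∀ x ∈ D i, ∀ φ, slL φ (Coalgebra.comul (R := k) (A := C) x) ∈ D i)
    (hd : ∀ i j, i ≠ j → Disjoint (D i) (D j)) (s : Finset ι) :
    ∀ c, c ∉ s → Disjoint (D c) (⨆ i ∈ s, D i) := by
  induction s using Finset.induction_on with
  | empty => simp
  | insert a s ha ih =>
    intro c hc
    rw [Finset.mem_insert, not_or] at hc
    obtain ⟨ψ, h1, h2⟩ := exists_functional _ _ (ih a ha) (Coalgebra.counit (R := k) (A := C))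
    have hS : ∀ x ∈ ⨆ i ∈ s, D i, ∀ φ,
        act (Coalgebra.comul (R := k) (A := C)) φ x ∈ ⨆ i ∈ s, D i := by
      intro x hx φ
      have : (⨆ i ∈ s, D i) ≤ (⨆ i ∈ s, D i).comap
          (act (Coalgebra.comul (R := k) (A := C)) φ) := by
        refine iSup₂_le fun i hi y hy => ?_
        exact (le_iSup₂ (f := fun i (_ : i ∈ s) => D i) i hi) (hact i y hy φ)
      exact this hx
    rw [Finset.iSup_insert, Submodule.disjoint_def]
    intro x hx hx'
    obtain ⟨xa, hxa, xr, hxr, rfl⟩ := Submodule.mem_sup.1 hx'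
    have h3 := hsl c _ hx ψ
    have h4 : slL ψ (Coalgebra.comul (R := k) xa) = xa := by
      apply dual_ext (k := k)
      intro ω
      rw [apply_slL, ← act_apply, h1 _ (hact a _ hxa ω), counit_act]
    have h5 : slL ψ (Coalgebra.comul (R := k) xr) = 0 := by
      apply dual_ext (k := k)
      intro ω
      rw [apply_slL, ← act_apply, h2 _ (hS _ hxr ω), map_zero]
    rw [map_add, map_add, h4, h5, add_zero] at h3
    have h6 : xa = 0 := Submodule.disjoint_def.1 (hd c a hc.1) _ h3 hxa
    subst h6
    rw [zero_add] at hx ⊢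
    exact Submodule.disjoint_def.1 (ih c hc.2) _ hx hxr

lemma exists_psi {ι : Type u} (D : ι → Submodule k C)
    (hact : ∀ i, ∀ x ∈ D i, ∀ φ, act (Coalgebra.comul (R := k) (A := C)) φ x ∈ D i)
    (hsl : ∀ i, ∀ x ∈ D i, ∀ φ, slL φ (Coalgebra.comul (R := k) (A := C) x) ∈ D i)
    (hd : ∀ i j, i ≠ j → Disjoint (D i) (D j)) (c : ι) :
    ∃ ψ : C →ₗ[k] k, (∀ x ∈ D c, ψ x = Coalgebra.counit (R := k) x) ∧
      ∀ j, j ≠ c → ∀ x ∈ D j, ψ x = 0 := by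
  classical
  have : Disjoint (D c) (⨆ j : {j // j ≠ c}, D j) := by
    rw [Submodule.disjoint_def]
    intro x hx hx'
    obtain ⟨s, hs⟩ := Submodule.mem_iSup_iff_exists_finset.1 hx'
    have h := disj_finset D hact hsl hd (s.image Subtype.val) c (by simp)
    refine Submodule.disjoint_def.1 h x hx ?_
    have hle : (⨆ i ∈ s, D (i : ι)) ≤ ⨆ i ∈ s.image Subtype.val, D i := by
      refine iSup₂_le fun i hi => ?_
      exact le_iSup₂ (f := fun i (_ : i ∈ s.image Subtype.val) => D i) (i : ι)
        (Finset.mem_image_of_mem _ hi)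
    exact hle hs
  obtain ⟨ψ, h1, h2⟩ := exists_functional _ _ this (Coalgebra.counit (R := k) (A := C))
  refine ⟨ψ, h1, fun j hj x hx => h2 x ?_⟩
  exact (le_iSup (fun j : {j // j ≠ c} => D j) ⟨j, hj⟩) hx
end coalg

variable {H : Type u} [Ring H] [HopfAlgebra k H] {Γ : Type u} [Group Γ]

structure Graded (D : Γ → Submodule k H) : Prop where
  hact : ∀ i, ∀ x ∈ D i, ∀ φ, act (Coalgebra.comul (R := k) (A := H)) φ x ∈ D i
  hsl : ∀ i, ∀ x ∈ D i, ∀ φ, slL φ (Coalgebra.comul (R := k) (A := H) x) ∈ D i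
  hmul : ∀ g h x y, x ∈ D g → y ∈ D h → x * y ∈ D (g * h)
  hone : 1 ∈ D 1
  hS : ∀ g x, x ∈ D g → HopfAlgebra.antipode k x ∈ D g⁻¹
  hne : ∀ g, ∃ y ∈ D g, Coalgebra.counit (R := k) y = 1

variable {D : Γ → Submodule k H}

lemma Graded.one_mem (hD : Graded D) {g h : Γ} {x : H} (hx : x ∈ D g) (hx' : x ∈ D h) (h0 : x ≠ 0) :
    1 ∈ D (g⁻¹ * h) := by
  obtain ⟨φ, hφ⟩ : ∃ φ : H →ₗ[k] k, φ x = 1 := by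
    by_contra hcon
    push Not at hcon
    apply h0
    apply dual_ext (k := k)
    intro φ
    rw [map_zero]
    by_contra h1
    apply hcon ((φ x)⁻¹ • φ)
    simp [h1]
  obtain ⟨t, ht⟩ : Coalgebra.comul (R := k) (act (Coalgebra.comul (R := k) (A := H)) φ x) ∈
      LinearMap.range (TensorProduct.map (D g).subtype (D h).subtype) := by
    apply mem_range_map
    · rw [mem_range_iff]
      exact hD.hact g _ (hD.hact g _ hx φ)
    · apply mem_range_iffL
      exact hD.hsl h _ (hD.hact h _ hx' φ)
  have key : ∀ t : D g ⊗[k] D h, LinearMap.mul' k H ((HopfAlgebra.antipode k).rTensor H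
      (TensorProduct.map (D g).subtype (D h).subtype t)) ∈ D (g⁻¹ * h) := by
    intro t
    induction t with
    | zero => simp
    | add a b ha hb => simp only [map_add]; exact add_mem ha hb
    | tmul a b =>
      simp only [TensorProduct.map_tmul, LinearMap.rTensor_tmul, LinearMap.mul'_apply,
        Submodule.subtype_apply]
      exact hD.hmul _ _ _ _ (hD.hS _ _ a.2) b.2
  have := key t
  rw [ht, HopfAlgebra.mul_antipode_rTensor_comul_apply, counit_act, hφ, map_one] at this
  exact this

lemma Graded.inv_mem (hD : Graded D) {g : Γ} (h : (1 : H) ∈ D g) : (1 : H) ∈ D g⁻¹ := by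
  have := hD.hS _ _ h
  rwa [HopfAlgebra.antipode_one] at this

lemma Graded.le (hD : Graded D) {g h : Γ} (h1 : (1 : H) ∈ D (g⁻¹ * h)) : D g ≤ D h := by
  intro x hx
  have := hD.hmul _ _ _ _ hx h1
  rwa [mul_one, mul_inv_cancel_left] at this

lemma Graded.eq (hD : Graded D) {g h : Γ} (h1 : (1 : H) ∈ D (g⁻¹ * h)) : D g = D h := by
  apply le_antisymm (hD.le h1) (hD.le _)
  have := hD.inv_mem h1
  rwa [mul_inv_rev, inv_inv] at this

lemma Graded.conj (hD : Graded D) {g n : Γ} (h1 : (1 : H) ∈ D n) : (1 : H) ∈ D (g * n * g⁻¹) := by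
  obtain ⟨y, hy, hy1⟩ := hD.hne g
  obtain ⟨t, ht⟩ : Coalgebra.comul (R := k) y ∈
      LinearMap.range (TensorProduct.map (D g).subtype (D g).subtype) := by
    apply mem_range_map
    · rw [mem_range_iff]
      exact hD.hact g _ hy
    · apply mem_range_iffL
      exact hD.hsl g _ hy
  have key : ∀ t : D g ⊗[k] D g, LinearMap.mul' k H ((HopfAlgebra.antipode k).lTensor H
      (TensorProduct.map (D g).subtype (D g).subtype t)) ∈ D (g * n * g⁻¹) := by
    intro t
    induction t with
    | zero => simp
    | add a b ha hb => simp only [map_add]; exact add_mem ha hb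
    | tmul a b =>
      simp only [TensorProduct.map_tmul, LinearMap.lTensor_tmul, LinearMap.mul'_apply,
        Submodule.subtype_apply]
      have := hD.hmul _ _ _ _ (hD.hmul _ _ _ _ a.2 h1) (hD.hS _ _ b.2)
      rwa [mul_one] at this
  have := key t
  rw [ht, HopfAlgebra.mul_antipode_lTensor_comul_apply, hy1, map_one] at this
  exact this

lemma Graded.main (hD : Graded D) : ∃ N : Subgroup Γ, N.Normal ∧ (∀ g ∈ N, D g = D 1) ∧
    ∀ c : Γ ⧸ N, ∃ ψ : H →ₗ[k] k, ∀ g : Γ, ∀ x ∈ D g,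
      ((QuotientGroup.mk g : Γ ⧸ N) = c → ψ x = Coalgebra.counit (R := k) x) ∧
      ((QuotientGroup.mk g : Γ ⧸ N) ≠ c → ψ x = 0) := by
  let N : Subgroup Γ :=
    { carrier := {g | (1 : H) ∈ D g}
      mul_mem' := by
        intro a b ha hb
        have := hD.hmul _ _ _ _ ha hb
        rwa [mul_one] at this
      one_mem' := hD.hone
      inv_mem' := hD.inv_mem }
  have hN : N.Normal := ⟨fun n hn g => hD.conj hn⟩
  refine ⟨N, hN, ?_, ?_⟩
  · intro g hg
    refine (hD.eq ?_).symm
    rw [inv_one, one_mul]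
    exact hg
  · intro c
    let E : Γ ⧸ N → Submodule k H := fun q => Quotient.liftOn' q D (by
      intro a b hab
      exact hD.eq (QuotientGroup.leftRel_apply.1 hab))
    have hE : ∀ g, E (QuotientGroup.mk g) = D g := fun g => rfl
    obtain ⟨ψ, h1, h2⟩ := exists_psi E
      (by
        intro q
        obtain ⟨g, rfl⟩ := QuotientGroup.mk_surjective q
        exact hD.hact g)
      (by
        intro q
        obtain ⟨g, rfl⟩ := QuotientGroup.mk_surjective q
        exact hD.hsl g)
      (by
        intro p q hpq
        obtain ⟨g, rfl⟩ := QuotientGroup.mk_surjective p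
        obtain ⟨h, rfl⟩ := QuotientGroup.mk_surjective q
        rw [Submodule.disjoint_def]
        intro x hx hx'
        by_contra h0
        exact hpq (QuotientGroup.eq.2 (hD.one_mem hx hx' h0)))
      c
    refine ⟨ψ, fun g x hx => ⟨?_, ?_⟩⟩
    · rintro rfl
      exact h1 x hx
    · intro hne
      exact h2 _ hne x hx

end Ee

section Ff
variable {k : Type u} [Field k] [IsAlgClosed k]
variable {G : Type u} [Ring G] [HopfAlgebra k G]
variable {Z : Type u} [Ring Z] [HopfAlgebra k Z]
variable {H : Type u} [Ring H] [HopfAlgebra k H]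

lemma exists_zEquiv (ζ : G →ₐc[k] Z) (hs : Function.Surjective ζ)
    (hζ : IsCentralMap k G (ζ : G →ₗ[k] Z)) (hG : IsCosemisimple k G) :
    ∃ e : Z →ₐc[k] MonoidAlgebra k (GroupLike k Z),
      ∀ g : GroupLike k Z, e g.val = MonoidAlgebra.single g 1 := by
  let L : MonoidAlgebra k (GroupLike k Z) →ₐc[k] Z := MonoidAlgebra.liftGroupLikeBialgHom
  have hL : ∀ g : GroupLike k Z, L (MonoidAlgebra.single g 1) = g.val := by
    intro g
    simp [L]
  have hb : Function.Bijective L := by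
    constructor
    · have hli : LinearIndependent k (GroupLike.val (R := k) (A := Z)) := linearIndep_groupLikeVal
      intro a b hab
      have hLc : ∀ a, L a = Finsupp.linearCombination k (GroupLike.val (R := k) (A := Z))
          (MonoidAlgebra.coeffLinearEquiv k a) := by
        intro a
        induction a using MonoidAlgebra.induction_linear with
        | zero => simp
        | add a b ha hb => simp only [map_add, ha, hb]
        | single g r => simp [L]
      rw [hLc, hLc] at hab
      exact (MonoidAlgebra.coeffLinearEquiv k).injective (hli hab)
    · intro z
      obtain ⟨x, rfl⟩ := hs z
      have hx : x ∈ ⨆ g : GroupLike k Z, gr ζ g.val := by rw [gr_span ζ hζ hG]; trivial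
      induction hx using Submodule.iSup_induction' with
      | mem h y hy =>
        refine ⟨Coalgebra.counit (R := k) y • MonoidAlgebra.single h 1, ?_⟩
        rw [map_smul, hL, gr_zeta ζ hy]
      | zero => exact ⟨0, by simp⟩
      | add a b _ _ ha hb =>
        obtain ⟨a', ha⟩ := ha
        obtain ⟨b', hb⟩ := hb
        exact ⟨a' + b', by rw [map_add, map_add, ha, hb]⟩
  let E := BialgEquiv.ofBijective L hb
  refine ⟨E.symm.toBialgHom, fun g => ?_⟩
  change E.symm g.val = _
  have : g.val = E (MonoidAlgebra.single g 1) := (hL g).symm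
  rw [this]
  exact E.toEquiv.symm_apply_apply _

lemma exists_coeff (ζ : G →ₐc[k] Z) (hs : Function.Surjective ζ)
    (hζ : IsCentralMap k G (ζ : G →ₗ[k] Z)) (hG : IsCosemisimple k G) (d : GroupLike k Z) :
    ∃ c : Z →ₗ[k] k, c d.val = 1 ∧ ∀ g : GroupLike k Z, g ≠ d → c g.val = 0 := by
  classical
  obtain ⟨e, he⟩ := exists_zEquiv ζ hs hζ hG
  refine ⟨Finsupp.lapply d ∘ₗ (MonoidAlgebra.coeffLinearEquiv k).toLinearMap ∘ₗ
    (e : Z →ₗ[k] MonoidAlgebra k (GroupLike k Z)), ?_, ?_⟩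
  · change (e d.val).coeff d = 1
    rw [he]; simp
  · intro g hg
    change (e g.val).coeff d = 0
    rw [he]; simp [hg]

lemma gr_ne (ζ : G →ₐc[k] Z) (hs : Function.Surjective ζ)
    (hζ : IsCentralMap k G (ζ : G →ₗ[k] Z)) (hG : IsCosemisimple k G) (d : GroupLike k Z) :
    ∃ y ∈ gr ζ d.val, Coalgebra.counit (R := k) y = 1 := by
  obtain ⟨c, hc1, hc0⟩ := exists_coeff ζ hs hζ hG d
  obtain ⟨x, hx⟩ := hs d.val
  refine ⟨act (Coalgebra.comul (R := k) (A := G)) (c ∘ₗ (ζ : G →ₗ[k] Z)) x, ?_, ?_⟩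
  · have hx' : x ∈ ⨆ g : GroupLike k Z, gr ζ g.val := by rw [gr_span ζ hζ hG]; trivial
    clear hx
    induction hx' using Submodule.iSup_induction' with
    | mem h y hy =>
      rw [(mem_gr' _ _ _).1 hy]
      by_cases hh : h = d
      · subst hh
        exact Submodule.smul_mem _ _ hy
      · rw [hc0 h hh, zero_smul]
        exact zero_mem _
    | zero => simp
    | add a b _ _ ha hb => rw [map_add]; exact add_mem ha hb
  · rw [counit_act]
    change c (ζ x) = 1
    rw [hx, hc1]

lemma graded (π : G →ₐc[k] H) (ζ : G →ₐc[k] Z) (hs : Function.Surjective ζ)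
    (hζ : IsCentralMap k G (ζ : G →ₗ[k] Z)) (hG : IsCosemisimple k G) :
    Graded (fun g : GroupLike k Z => (gr ζ g.val).map (π : G →ₗ[k] H)) where
  hact := by
    rintro g _ ⟨x, hx, rfl⟩ φ
    exact ⟨_, gr_act ζ hζ hx _, (act_map (π : G →ₗc[k] H) φ x).symm⟩
  hsl := by
    rintro g _ ⟨x, hx, rfl⟩ φ
    refine ⟨_, gr_slL ζ hx (φ ∘ₗ (π : G →ₗ[k] H)), ?_⟩
    apply dual_ext (k := k)
    intro ω
    rw [apply_slL, ← act_apply]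
    have h := act_map (π : G →ₗc[k] H) ω x
    refine Eq.trans ?_ (congrArg φ h).symm
    exact apply_slL (φ ∘ₗ (π : G →ₗ[k] H)) (ω ∘ₗ (π : G →ₗ[k] H)) (Coalgebra.comul x)
  hmul := by
    rintro g h _ _ ⟨x, hx, rfl⟩ ⟨y, hy, rfl⟩
    refine ⟨x * y, gr_mul ζ hx hy, ?_⟩
    exact map_mul π x y
  hone := ⟨1, gr_one ζ, map_one π⟩
  hS := by
    rintro g _ ⟨x, hx, rfl⟩
    exact ⟨_, gr_antipode ζ hζ hG g hx, antipode_hom π x⟩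
  hne := by
    intro g
    obtain ⟨y, hy, h1⟩ := gr_ne ζ hs hζ hG g
    refine ⟨π y, ⟨y, hy, rfl⟩, ?_⟩
    rw [← h1]
    exact CoalgHomClass.counit_comp_apply π y

lemma exists_lift {W : Type u} [Ring W] [HopfAlgebra k W] (π : G →ₐc[k] H)
    (hπ : Function.Surjective π) (θ : G →ₐc[k] W) (h : ∀ x, π x = 0 → θ x = 0) :
    ∃ β : H →ₐc[k] W, θ = β.comp π := by
  have hw : ∀ x y, π x = π y → θ x = θ y := by
    intro x y hxy
    rw [← sub_eq_zero, ← map_sub]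
    apply h
    rw [map_sub, hxy, sub_self]
  let s : H → G := Function.surjInv hπ
  have hsec : ∀ y, π (s y) = y := Function.surjInv_eq hπ
  let b : H →ₐ[k] W :=
    { toFun := fun y => θ (s y)
      map_one' := by rw [← map_one θ]; exact hw _ _ (by rw [hsec, map_one])
      map_zero' := by rw [← map_zero θ]; exact hw _ _ (by rw [hsec, map_zero])
      map_mul' := fun x y => by
        rw [← map_mul θ]; exact hw _ _ (by rw [hsec, map_mul, hsec, hsec])
      map_add' := fun x y => by
        rw [← map_add θ]; exact hw _ _ (by rw [hsec, map_add, hsec, hsec])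
      commutes' := fun r => by
        rw [← AlgHomClass.commutes θ r]
        exact hw _ _ (by rw [hsec]; exact (AlgHomClass.commutes π r).symm) }
  have hb : ∀ x, b (π x) = θ x := fun x => hw _ _ (hsec _)
  have hbl : b.toLinearMap ∘ₗ (π : G →ₗ[k] H) = (θ : G →ₗ[k] W) := LinearMap.ext hb
  refine ⟨BialgHom.ofAlgHom b ?_ ?_, ?_⟩
  · ext y
    obtain ⟨x, rfl⟩ := hπ y
    change Coalgebra.counit (R := k) (b (π x)) = Coalgebra.counit (R := k) (π x)
    rw [hb]
    exact (CoalgHomClass.counit_comp_apply θ x).trans (CoalgHomClass.counit_comp_apply π x).symm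
  · ext y
    obtain ⟨x, rfl⟩ := hπ y
    change TensorProduct.map b.toLinearMap b.toLinearMap (Coalgebra.comul (R := k) (π x)) =
      Coalgebra.comul (R := k) (b (π x))
    rw [hb]
    have h1 : TensorProduct.map (π : G →ₗ[k] H) (π : G →ₗ[k] H) (Coalgebra.comul (R := k) x) =
      Coalgebra.comul (R := k) (π x) := CoalgHomClass.map_comp_comul_apply π x
    have h2 : TensorProduct.map (θ : G →ₗ[k] W) (θ : G →ₗ[k] W) (Coalgebra.comul (R := k) x) =
      Coalgebra.comul (R := k) (θ x) := CoalgHomClass.map_comp_comul_apply θ x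
    rw [← h1, ← h2, ← LinearMap.comp_apply, ← TensorProduct.map_comp, hbl]
  · ext x
    exact (hb x).symm

lemma key_eq (π : G →ₐc[k] H) (hπ : Function.Surjective π)
    (ζ : G →ₐc[k] Z) (hs : Function.Surjective ζ)
    (hζ : IsCentralMap k G (ζ : G →ₗ[k] Z)) (hG : IsCosemisimple k G)
    (ZH : Type u) [Ring ZH] [HopfAlgebra k ZH] (α : Z →ₐc[k] ZH) (β : H →ₐc[k] ZH)
    (hpushout : ∀ (W : Type u) [Ring W] [HopfAlgebra k W]
      (α' : Z →ₐc[k] W) (β' : H →ₐc[k] W), α'.comp ζ = β'.comp π →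
      ∃! t : ZH →ₐc[k] W, t.comp α = α' ∧ t.comp β = β')
    (g : GroupLike k Z) (hg : α g.val = 1) :
    (gr ζ g.val).map (π : G →ₗ[k] H) = (gr ζ 1).map (π : G →ₗ[k] H) := by
  classical
  obtain ⟨N, hN, hN1, hψ⟩ := (graded π ζ hs hζ hG).main
  suffices hgN : g ∈ N from hN1 g hgN
  obtain ⟨e, he⟩ := exists_zEquiv ζ hs hζ hG
  let α' : Z →ₐc[k] MonoidAlgebra k (GroupLike k Z ⧸ N) :=
    (MonoidAlgebra.mapDomainBialgHom k (QuotientGroup.mk' N)).comp e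
  have hα' : ∀ g : GroupLike k Z, α' g.val = MonoidAlgebra.single (g : GroupLike k Z ⧸ N) 1 := by
    intro g
    change MonoidAlgebra.mapDomainBialgHom k (QuotientGroup.mk' N) (e g.val) = _
    rw [he, MonoidAlgebra.mapDomainBialgHom_single]
    rfl
  have hker : ∀ x, π x = 0 → (α'.comp ζ) x = 0 := by
    intro x hx
    apply MonoidAlgebra.ext
    apply Finsupp.ext
    intro c
    obtain ⟨ψ, hψ⟩ := hψ c
    have : ∀ y, (α' (ζ y)).coeff c = ψ (π y) := by
      intro y
      have hy : y ∈ ⨆ g : GroupLike k Z, gr ζ g.val := by rw [gr_span ζ hζ hG]; trivial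
      induction hy using Submodule.iSup_induction' with
      | mem h y hy =>
        have hh := hψ h (π y) ⟨y, hy, rfl⟩
        have hc : Coalgebra.counit (R := k) (π y) = Coalgebra.counit (R := k) y :=
          CoalgHomClass.counit_comp_apply π y
        rw [gr_zeta ζ hy, map_smul, hα']
        by_cases hq : (h : GroupLike k Z ⧸ N) = c
        · rw [hh.1 hq, hc]
          simp [hq]
        · rw [hh.2 hq]
          simp [hq]
      | zero => simp
      | add a b _ _ ha hb =>
        simp only [map_add, ← ha, ← hb]
        simp
    have h2 := this x
    rw [hx, map_zero] at h2
    exact h2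
  obtain ⟨β', hβ'⟩ := exists_lift π hπ (α'.comp ζ) hker
  obtain ⟨t, ⟨ht, -⟩, -⟩ := hpushout _ α' β' hβ'
  have h3 : α' g.val = 1 := by
    rw [← ht]
    change t (α g.val) = 1
    rw [hg, map_one]
  rw [hα', MonoidAlgebra.one_def] at h3
  have h4 := MonoidAlgebra.single_left_injective (one_ne_zero) h3
  exact (QuotientGroup.eq_one_iff g).1 h4

end Ff

section Gg

lemma final (k : Type u) [Field k] [IsAlgClosed k]
    (G Hh : Type u) [Ring G] [HopfAlgebra k G] [Ring Hh] [HopfAlgebra k Hh]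
    (π : G →ₐc[k] Hh) (hsurj : Function.Surjective π)
    (hcssG : IsCosemisimple k G) (hcssH : IsCosemisimple k Hh)
    (Z : Type u) [Ring Z] [HopfAlgebra k Z]
    (ζ : G →ₐc[k] Z) (hζsurj : Function.Surjective ζ)
    (hζcentral : IsCentralMap k G (ζ : G →ₗ[k] Z))
    (ZH : Type u) [Ring ZH] [HopfAlgebra k ZH]
    (α : Z →ₐc[k] ZH) (β : Hh →ₐc[k] ZH)
    (hpushout : ∀ (W : Type u) [Ring W] [HopfAlgebra k W]
      (α' : Z →ₐc[k] W) (β' : Hh →ₐc[k] W), α'.comp ζ = β'.comp π →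
      ∃! t : ZH →ₐc[k] W, t.comp α = α' ∧ t.comp β = β')
    (X : SimpleComodule k G)
    (htriv : HasCentralChar k G ((α.comp ζ : G →ₐc[k] ZH) : G →ₗ[k] ZH) X 1) :
    ∃ X₁ : SimpleComodule k G,
      HasCentralChar k G (ζ : G →ₗ[k] Z) X₁ 1 ∧
      ∃ f : X₁.V →ₗ[k] X.V, f ≠ 0 ∧
        IsComodHom k Hh (cores k G (π : G →ₗ[k] Hh) X₁.ρ)
          (cores k G (π : G →ₗ[k] Hh) X.ρ) f := by
  classical
  obtain ⟨g, hg⟩ := exists_char _ hζcentral X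
  have hgl : IsGroupLikeElem k g := char_groupLike (ζ : G →ₗc[k] Z) X g hg
  rw [hasCentralChar_iff] at hg htriv
  obtain ⟨v, hv⟩ := exists_ne X
  have hαg : α g = 1 := by
    apply dual_ext (k := k)
    intro ω
    have h1 := htriv ω v
    have h2 := hg (ω ∘ₗ (α : Z →ₗ[k] ZH)) v
    exact smul_left_injective k hv (h2.symm.trans h1)
  have hD := key_eq π hsurj ζ hζsurj hζcentral hcssG ZH α β hpushout ⟨g, hgl⟩ hαg
  obtain ⟨f, hf⟩ : ∃ f : X.V →ₗ[k] k, f v ≠ 0 := by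
    by_contra hcon
    push Not at hcon
    exact hv (dual_ext (k := k) (fun f => by rw [hcon f, map_zero]))
  -- the coefficient map
  let c : X.V →ₗ[k] G := slL f ∘ₗ X.ρ
  have hc : ∀ x, c x ∈ gr ζ g := by
    intro x
    rw [mem_gr']
    intro ω
    change act _ _ (slL f (X.ρ x)) = ω g • slL f (X.ρ x)
    rw [act_coeff X.isComod, hg, map_smul, map_smul]
  have hcc : ∀ x, Coalgebra.counit (R := k) (c x) = f x := counit_coeff X.isComod f
  let F : X.V →ₗ[k] Hh := (π : G →ₗ[k] Hh) ∘ₗ c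
  have hF0 : F ≠ 0 := by
    intro h0
    apply hf
    rw [← hcc v, ← CoalgHomClass.counit_comp_apply (R := k) π (c v)]
    have : π (c v) = 0 := LinearMap.congr_fun h0 v
    rw [this, map_zero]
  have hF : ∀ φ v, act (Coalgebra.comul (R := k) (A := Hh)) φ (F v) =
      F (act (cores k G (π : G →ₗ[k] Hh) X.ρ) φ v) := by
    intro φ v
    have h1 := act_map (π : G →ₗc[k] Hh) φ (c v)
    refine h1.trans ?_
    rw [act_cores]
    exact congrArg π (act_coeff X.isComod f (φ ∘ₗ (π : G →ₗ[k] Hh)) v)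
  have hM : IsComod k Hh (cores k G (π : G →ₗ[k] Hh) X.ρ) :=
    isComod_cores (π : G →ₗc[k] Hh) X.isComod
  obtain ⟨q, hq, x, hx⟩ := exists_back hcssH hM comul_isComod F hF hF0
  obtain ⟨a, ha, hax⟩ : F x ∈ (gr ζ 1).map (π : G →ₗ[k] Hh) := by
    rw [← hD]
    exact ⟨c x, hc x, rfl⟩
  obtain ⟨c1, hc1, hc0⟩ := exists_coeff ζ hζsurj hζcentral hcssG 1
  let P : G →ₗ[k] G := act (Coalgebra.comul (R := k) (A := G)) (c1 ∘ₗ (ζ : G →ₗ[k] Z))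
  have hPa : P a = a := by
    have h1 := (mem_gr' ζ 1 a).1 ha c1
    have h2 : c1 (1 : Z) = 1 := hc1
    rw [h2, one_smul] at h1
    exact h1
  let T : G →ₗ[k] X.V := q ∘ₗ (π : G →ₗ[k] Hh) ∘ₗ P
  have hT : T a ≠ 0 := by
    change q ((π : G →ₗ[k] Hh) (P a)) ≠ 0
    rw [hPa, hax]
    exact hx
  obtain ⟨ι, U, hU, -, hUt⟩ := hcssG G _ comul_isComod
  obtain ⟨i, hi⟩ : ∃ i, ∃ u ∈ U i, T u ≠ 0 := by
    by_contra hcon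
    push Not at hcon
    have hle : (⨆ i, U i) ≤ LinearMap.ker T := iSup_le fun i u hu => hcon i u hu
    rw [hUt] at hle
    exact hT (hle (Submodule.mem_top (x := a)))
  obtain ⟨u, hu, hTu⟩ := hi
  obtain ⟨ρU, h1, h2, h3⟩ := exists_simple comul_isComod (U i) (hU i)
  let X₁ : SimpleComodule k G := ⟨U i, ρU, h2, h3⟩
  obtain ⟨g₁, hg₁⟩ := exists_char _ hζcentral X₁
  have hgl₁ : IsGroupLikeElem k g₁ := char_groupLike (ζ : G →ₗc[k] Z) X₁ g₁ hg₁
  have hg₁' := (hasCentralChar_iff _ _ _).1 hg₁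
  have hPu : P u = c1 g₁ • u := by
    have h4 := h1 (c1 ∘ₗ (ζ : G →ₗ[k] Z)) ⟨u, hu⟩
    have h5 : act ρU (c1 ∘ₗ (ζ : G →ₗ[k] Z)) ⟨u, hu⟩ = c1 g₁ • (⟨u, hu⟩ : U i) :=
      hg₁' c1 (⟨u, hu⟩ : U i)
    rw [h5] at h4
    exact h4.symm
  have hTu' : T u = c1 g₁ • q (π u) := by
    change q ((π : G →ₗ[k] Hh) (P u)) = _
    rw [hPu, map_smul, map_smul]
    rfl
  have hg1 : g₁ = 1 := by
    by_contra hne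
    apply hTu
    have : c1 g₁ = 0 := hc0 ⟨g₁, hgl₁⟩ (fun h => hne (congrArg GroupLike.val h))
    rw [hTu', this, zero_smul]
  refine ⟨X₁, hg1 ▸ hg₁, q ∘ₗ (π : G →ₗ[k] Hh) ∘ₗ (U i).subtype, ?_, ?_⟩
  · intro h0
    apply hTu
    have h5 : q (π u) = 0 := LinearMap.congr_fun h0 (⟨u, hu⟩ : U i)
    rw [hTu', h5, smul_zero]
  · rw [isComodHom_iff]
    intro φ w
    change act (cores k G (π : G →ₗ[k] Hh) X.ρ) φ (q (π (w : U i).val)) =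
      q (π (act (cores k G (π : G →ₗ[k] Hh) ρU) φ w : U i).val)
    rw [hq, act_cores (π : G →ₗ[k] Hh) ρU, h1]
    exact congrArg q (act_map (π : G →ₗc[k] Hh) φ (w : U i).val)

end Gg

end QGP

open QG in
/-- Let `H ≤ G` be an embedding of linearly reductive
quantum groups and `V ∈ Ĝ` a simple comodule whose restriction to the
relative center `Z(G,H) = Z(G) ∩ H` is a sum of copies of the trivial
character.  Then there is a simple `V₁ ∈ Ĝ` with trivial central character
(trivial restriction to `Z(G)`) which is not disjoint from `V` over `H`. -/
theorem statement_16 (k : Type u) [Field k] [IsAlgClosed k]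
    (G Hh : Type u) [Ring G] [HopfAlgebra k G] [Ring Hh] [HopfAlgebra k Hh]
    (π : G →ₐc[k] Hh) (hsurj : Function.Surjective π)
    (hcssG : IsCosemisimple k G) (hcssH : IsCosemisimple k Hh)
    (Z : Type u) [Ring Z] [HopfAlgebra k Z]
    (ζ : G →ₐc[k] Z) (hζsurj : Function.Surjective ζ)
    (hζcentral : IsCentralMap k G (ζ : G →ₗ[k] Z))
    (hζlargest : ∀ (Z' : Type u) [Ring Z'] [HopfAlgebra k Z'] (ζ' : G →ₐc[k] Z'),
      Function.Surjective ζ' → IsCentralMap k G (ζ' : G →ₗ[k] Z') →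
      ∃ t : Z →ₐc[k] Z', t.comp ζ = ζ')
    (ZH : Type u) [Ring ZH] [HopfAlgebra k ZH]
    (α : Z →ₐc[k] ZH) (β : Hh →ₐc[k] ZH)
    (hαsurj : Function.Surjective α) (hβsurj : Function.Surjective β)
    (hcomm : α.comp ζ = β.comp π)
    (hpushout : ∀ (W : Type u) [Ring W] [HopfAlgebra k W]
      (α' : Z →ₐc[k] W) (β' : Hh →ₐc[k] W), α'.comp ζ = β'.comp π →
      ∃! t : ZH →ₐc[k] W, t.comp α = α' ∧ t.comp β = β')
    (X : SimpleComodule k G)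
    (htriv : HasCentralChar k G ((α.comp ζ : G →ₐc[k] ZH) : G →ₗ[k] ZH) X 1) :
    ∃ X₁ : SimpleComodule k G,
      HasCentralChar k G (ζ : G →ₗ[k] Z) X₁ 1 ∧
      ∃ f : X₁.V →ₗ[k] X.V, f ≠ 0 ∧
        IsComodHom k Hh (cores k G (π : G →ₗ[k] Hh) X₁.ρ)
          (cores k G (π : G →ₗ[k] Hh) X.ρ) f := by
  exact QGP.final k G Hh π hsurj hcssG hcssH Z ζ hζsurj hζcentral ZH α β hpushout X htriv
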